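/- Fix φ > 0, and let π : (0,∞)² → (0,∞) be a measurable prior density in the arguments (μ,α). Suppose there are continuous functions π_μ, π_α : (0,∞) → (0,∞) with π(μ,α) ≳ π_μ(μ)·π_α(α) on (0,∞)², that π_μ(μ) ≳ μ^k on (0,∞) for some k ∈ ℝ, and that one of the following holds: (i) k < −1; (ii) k > −1 and π_α(α) ≳ α^{q₀} as α → 0⁺ for some q₀ ∈ ℝ; (iii) k = −1 and π_α(α) ≳ α^{q₀} as α → 0⁺ with n ≤ −q₀. Then ∫_0^∞ ∫_0^∞ π(μ,α) α^n (∏_{i=1}^n x_i^{αφ−1}) μ^{nαφ} exp(−μ^α Σ_{i=1}^n x_i^α) dμ dα = ∞; i.e., the posterior for (μ,α) in the Stacy model with φ known is improper. -/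

import Mathlib

/-!
The likelihood is bounded below by replacing the `μ`-range by `(0, e^{1/α})`. There `μ^α ≤ e`, so for
`α ∈ (0, 1]` the factors `∏ x_i^{αφ-1}` and `exp (-μ^α ∑ x_i^α)` are bounded below by a positive
constant (compactness of `[0, 1]`), and the inner integral is at least a constant times
`πα α * α^n * ∫_0^{e^{1/α}} μ^{k + nαφ} dμ` (`inner_lower`).

If `k < -1`, this `μ`-integral already diverges at `0` for every small `α`. If `k ≥ -1`, it equals
`e^{(k+1)/α + nφ} / (k + 1 + nαφ)`. For `k > -1` the exponential beats every power of `α` as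
`α → 0⁺`; for `k = -1` the value is a constant times `1/α`, while `α^{n+q₀} ≥ 1`. In both cases the
inner integral dominates a constant times `1/α` near `0`, which is not integrable
(`outer_eq_top`). The full Gamma-function value of the inner integral is never needed.
-/

open MeasureTheory Real Filter Topology

lemma lintegral_rpow_eq_top {s t : ℝ} (hs : s ≤ -1) (ht : 0 < t) :
    ∫⁻ y in Set.Ioo 0 t, ENNReal.ofReal (y ^ s) = ⊤ := by
  by_contra h
  have h1 : IntegrableOn (fun y : ℝ => y ^ s) (Set.Ioo 0 t) := by
    refine ⟨by fun_prop, ?_⟩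
    rw [hasFiniteIntegral_iff_ofReal]
    · exact lt_top_iff_ne_top.2 h
    · filter_upwards [ae_restrict_mem measurableSet_Ioo] with y hy
      exact rpow_nonneg hy.1.le _
  rw [intervalIntegral.integrableOn_Ioo_rpow_iff ht] at h1
  linarith

lemma lintegral_rpow_eq {s t : ℝ} (hs : -1 < s) (ht : 0 < t) :
    ∫⁻ y in Set.Ioo 0 t, ENNReal.ofReal (y ^ s) = ENNReal.ofReal (t ^ (s + 1) / (s + 1)) := by
  rw [← ofReal_integral_eq_lintegral_ofReal]
  · rw [← integral_Ioc_eq_integral_Ioo, ← intervalIntegral.integral_of_le ht.le,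
      integral_rpow (Or.inl hs), zero_rpow (by linarith), sub_zero]
  · exact (intervalIntegral.integrableOn_Ioo_rpow_iff ht).2 hs
  · filter_upwards [ae_restrict_mem measurableSet_Ioo] with y hy
    exact rpow_nonneg hy.1.le _

/-- On `α ∈ [0, 1]` the factors of the likelihood other than the powers of `α` and `μ`, with `μ^α`
replaced by its bound `e`, stay away from zero. -/
lemma factors_lower {n : ℕ} {x : Fin n → ℝ} (hx : ∀ i, 0 < x i) (φ : ℝ) :
    ∃ m > 0, ∀ α ∈ Set.Icc (0:ℝ) 1,
      m ≤ (∏ i, x i ^ (α * φ - 1)) * Real.exp (-(Real.exp 1 * ∑ i, x i ^ α)) := by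
  have hc : Continuous fun α : ℝ =>
      (∏ i, x i ^ (α * φ - 1)) * Real.exp (-(Real.exp 1 * ∑ i, x i ^ α)) := by
    refine Continuous.mul (continuous_finsetProd _ fun i _ => ?_)
      (Real.continuous_exp.comp (continuous_const.mul
        (continuous_finsetSum _ fun i _ => ?_)).neg)
    · exact Continuous.rpow continuous_const (by fun_prop) fun _ => Or.inl (hx i).ne'
    · exact Continuous.rpow continuous_const continuous_id fun _ => Or.inl (hx i).ne'
  obtain ⟨a, -, ha⟩ := isCompact_Icc.exists_isMinOn
    (Set.nonempty_Icc.2 (zero_le_one' ℝ)) hc.continuousOn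
  exact ⟨_, mul_pos (Finset.prod_pos fun i _ => rpow_pos_of_pos (hx i) _) (Real.exp_pos _),
    fun α hα => ha hα⟩

lemma inner_lower {n : ℕ} {x : Fin n → ℝ} (hx : ∀ i, 0 < x i) (φ : ℝ)
    {prior : ℝ → ℝ → ℝ} {πμ πα : ℝ → ℝ} (hπα0 : ∀ t > 0, 0 < πα t)
    (hprod : ∃ c > 0, ∀ μ > 0, ∀ α > 0, c * (πμ μ * πα α) ≤ prior μ α)
    {k : ℝ} (hμk : ∃ c > 0, ∀ t > 0, c * t ^ k ≤ πμ t) :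
    ∃ C > 0, ∀ α ∈ Set.Ioc (0:ℝ) 1,
      ENNReal.ofReal (C * (πα α * α ^ n)) *
        (∫⁻ μ in Set.Ioo 0 (Real.exp (1 / α)), ENNReal.ofReal (μ ^ (k + n * α * φ))) ≤
      ∫⁻ μ in Set.Ioi (0:ℝ), ENNReal.ofReal (prior μ α * α ^ n *
        (∏ i, x i ^ (α * φ - 1)) * μ ^ ((n : ℝ) * α * φ) *
        Real.exp (-(μ ^ α * ∑ i, x i ^ α))) := by
  obtain ⟨m, hm, hmle⟩ := factors_lower hx φ
  obtain ⟨c, hc, hcle⟩ := hprod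
  obtain ⟨d, hd, hdle⟩ := hμk
  refine ⟨c * d * m, by positivity, fun α hα => ?_⟩
  have hα0 : 0 < α := hα.1
  rw [← lintegral_const_mul _ (by fun_prop)]
  refine le_trans ?_ (lintegral_mono_set
    (show Set.Ioo 0 (Real.exp (1 / α)) ⊆ Set.Ioi 0 from Set.Ioo_subset_Ioi_self))
  refine setLIntegral_mono' measurableSet_Ioo fun μ hμ => ?_
  have hμ0 : 0 < μ := hμ.1
  have hπ := hπα0 α hα0
  rw [← ENNReal.ofReal_mul (by positivity)]
  refine ENNReal.ofReal_le_ofReal ?_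
  have hμα : μ ^ α ≤ Real.exp 1 := by
    calc μ ^ α ≤ Real.exp (1 / α) ^ α := rpow_le_rpow hμ0.le hμ.2.le hα0.le
      _ = Real.exp 1 := by rw [← Real.exp_mul, one_div_mul_cancel hα0.ne']
  have hS : 0 ≤ ∑ i, x i ^ α := Finset.sum_nonneg fun i _ => (rpow_pos_of_pos (hx i) _).le
  have hP : 0 < ∏ i, x i ^ (α * φ - 1) := Finset.prod_pos fun i _ => rpow_pos_of_pos (hx i) _
  have h1 : m ≤ (∏ i, x i ^ (α * φ - 1)) * Real.exp (-(μ ^ α * ∑ i, x i ^ α)) := by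
    refine (hmle α ⟨hα0.le, hα.2⟩).trans ?_
    gcongr
  have h2 : c * d * (μ ^ k * πα α) ≤ prior μ α := by
    refine le_trans ?_ (hcle μ hμ0 α hα0)
    have := mul_le_mul_of_nonneg_right (hdle μ hμ0) (mul_pos hc hπ).le
    linarith
  have hk : 0 < μ ^ k := rpow_pos_of_pos hμ0 _
  have hnn : 0 < μ ^ ((n : ℝ) * α * φ) := rpow_pos_of_pos hμ0 _
  rw [rpow_add hμ0]
  calc c * d * m * (πα α * α ^ n) * (μ ^ k * μ ^ ((n : ℝ) * α * φ))
      = (c * d * (μ ^ k * πα α)) * m * (α ^ n * μ ^ ((n : ℝ) * α * φ)) := by ring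
    _ ≤ prior μ α * ((∏ i, x i ^ (α * φ - 1)) * Real.exp (-(μ ^ α * ∑ i, x i ^ α))) *
        (α ^ n * μ ^ ((n : ℝ) * α * φ)) := by
        gcongr
        exact le_trans (by positivity) h2
    _ = _ := by ring

/-- A function dominating a positive multiple of `1/α` near `0⁺` has infinite integral. -/
lemma outer_eq_top {F : ℝ → ENNReal} {C : ℝ} (hC : 0 < C)
    (h : ∀ᶠ α in 𝓝[>] (0:ℝ), ENNReal.ofReal C * ENNReal.ofReal (α ^ (-1:ℝ)) ≤ F α) :
    ∫⁻ α in Set.Ioi (0:ℝ), F α = ⊤ := by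
  obtain ⟨δ, hδ, hδF⟩ := mem_nhdsGT_iff_exists_Ioo_subset.1 h
  rw [eq_top_iff]
  calc (⊤ : ENNReal)
      = ENNReal.ofReal C * ∫⁻ α in Set.Ioo 0 δ, ENNReal.ofReal (α ^ (-1:ℝ)) := by
        rw [lintegral_rpow_eq_top le_rfl hδ, ENNReal.mul_top (by simpa using hC)]
    _ = ∫⁻ α in Set.Ioo 0 δ, ENNReal.ofReal C * ENNReal.ofReal (α ^ (-1:ℝ)) :=
        (lintegral_const_mul _ (by fun_prop)).symm
    _ ≤ ∫⁻ α in Set.Ioo 0 δ, F α := setLIntegral_mono' measurableSet_Ioo fun α hα => hδF hα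
    _ ≤ _ := lintegral_mono_set Set.Ioo_subset_Ioi_self

lemma eventually_lower {πα : ℝ → ℝ} (hπα0 : ∀ t > 0, 0 < πα t) {q : ℝ}
    (h : Filter.limsup (fun t => ENNReal.ofReal (t ^ q / πα t)) (𝓝[>] (0:ℝ)) < ⊤) :
    ∃ c > 0, ∀ᶠ t in 𝓝[>] (0:ℝ), c * t ^ q ≤ πα t := by
  obtain ⟨M, hM, hM'⟩ := exists_between h
  have hpos : 0 < M.toReal := ENNReal.toReal_pos (bot_le.trans_lt hM).ne' hM'.ne
  refine ⟨M.toReal⁻¹, by positivity, ?_⟩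
  filter_upwards [Filter.eventually_lt_of_limsup_lt hM, self_mem_nhdsWithin] with t ht ht0
  have h1 : t ^ q / πα t ≤ M.toReal := by
    rw [← ENNReal.ofReal_le_ofReal_iff hpos.le, ENNReal.ofReal_toReal hM'.ne]
    exact ht.le
  rw [div_le_iff₀ (hπα0 t ht0)] at h1
  rwa [inv_mul_le_iff₀ hpos]

/-- Exponential growth of `e^{b/α}` beats every power of `α` as `α → 0⁺`. -/
lemma eventually_rpow_mul_exp {b : ℝ} (hb : 0 < b) (s : ℝ) :
    ∀ᶠ α in 𝓝[>] (0:ℝ), 1 ≤ α ^ s * Real.exp (b / α) := by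
  have h := (tendsto_rpow_mul_exp_neg_mul_atTop_nhds_zero s b hb).comp
    (tendsto_inv_nhdsGT_zero (𝕜 := ℝ))
  filter_upwards [h.eventually_lt_const one_pos, self_mem_nhdsWithin] with α hα hα0
  have hα0 : 0 < α := hα0
  have hs : 0 < α ^ s := rpow_pos_of_pos hα0 _
  simp only [Function.comp_apply, neg_mul, ← div_eq_mul_inv, Real.exp_neg,
    inv_rpow hα0.le] at hα
  rw [div_eq_mul_inv, ← mul_inv] at hα
  exact ((inv_lt_one_iff₀.1 hα).resolve_left (not_le.2 (by positivity))).le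

/-- Case `k ≥ -1`, given the decisive estimate on the closed form of the `μ`-integral over
`(0, e^{1/α})`. -/
lemma top_of_estimate {n : ℕ} {φ k q K : ℝ} (hn : 0 < n) (hφ : 0 < φ) (hk : -1 ≤ k) (hK : 0 < K)
    {πα : ℝ → ℝ} (hπα0 : ∀ t > 0, 0 < πα t)
    (hq : Filter.limsup (fun t => ENNReal.ofReal (t ^ q / πα t)) (𝓝[>] (0:ℝ)) < ⊤)
    {F : ℝ → ENNReal} {C : ℝ} (hC : 0 < C)
    (hF : ∀ α ∈ Set.Ioc (0:ℝ) 1, ENNReal.ofReal (C * (πα α * α ^ n)) *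
        (∫⁻ μ in Set.Ioo 0 (Real.exp (1 / α)), ENNReal.ofReal (μ ^ (k + n * α * φ))) ≤ F α)
    (hest : ∀ᶠ α in 𝓝[>] (0:ℝ),
      K * α ^ (-1:ℝ) ≤ α ^ (q + n) * (Real.exp ((k + 1) / α) / (k + n * α * φ + 1))) :
    ∫⁻ α in Set.Ioi (0:ℝ), F α = ⊤ := by
  obtain ⟨c, hc, hcq⟩ := eventually_lower hπα0 hq
  refine outer_eq_top (C := C * c * K) (by positivity) ?_
  filter_upwards [hest, hcq, Ioc_mem_nhdsGT (zero_lt_one' ℝ)] with α h1 h2 hα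
  have hα0 : 0 < α := hα.1
  have hnp : 0 < (n : ℝ) * α * φ := by positivity
  have hE : 0 < k + n * α * φ + 1 := by linarith
  refine le_trans ?_ (hF α hα)
  have hπ := hπα0 α hα0
  rw [lintegral_rpow_eq (by linarith) (Real.exp_pos _), ← ENNReal.ofReal_mul (by positivity),
    ← ENNReal.ofReal_mul (by positivity)]
  refine ENNReal.ofReal_le_ofReal ?_
  have h3 : Real.exp ((k + 1) / α) ≤ Real.exp (1 / α) ^ (k + n * α * φ + 1) := by
    rw [← Real.exp_mul, one_div_mul_eq_div]
    gcongr
    linarith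
  rw [rpow_add hα0, rpow_natCast] at h1
  calc C * c * K * α ^ (-1:ℝ) = C * c * (K * α ^ (-1:ℝ)) := by ring
    _ ≤ C * c * (α ^ q * α ^ n * (Real.exp ((k + 1) / α) / (k + n * α * φ + 1))) := by gcongr
    _ = C * ((c * α ^ q) * α ^ n) * (Real.exp ((k + 1) / α) / (k + n * α * φ + 1)) := by ring
    _ ≤ _ := by gcongr

/-- (Theorem 2.5 of the paper.) In the Stacy model with `φ > 0` known,
if the prior `π(μ,α)` dominates a product `π_μ(μ)π_α(α)` with `π_μ(μ) ≳ μ^k`, and either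
(i) `k < -1`, (ii) `k > -1` and `π_α(α) ≳ α^{q₀}` as `α → 0⁺` for some `q₀`, or
(iii) `k = -1` and `π_α(α) ≳ α^{q₀}` as `α → 0⁺` with `n ≤ -q₀`,
then the posterior for `(μ,α)` is improper. -/
theorem stacy_phi_known_posterior_improper
    (n : ℕ) (hn : 2 ≤ n) (x : Fin n → ℝ) (hx : ∀ i, 0 < x i) (hxne : ∃ i j, x i ≠ x j)
    (φ : ℝ) (hφ : 0 < φ)
    (prior : ℝ → ℝ → ℝ) (hpm : Measurable fun p : ℝ × ℝ => prior p.1 p.2)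
    (hp0 : ∀ μ > 0, ∀ α > 0, 0 < prior μ α)
    (πμ πα : ℝ → ℝ)
    (hπμc : ContinuousOn πμ (Set.Ioi 0)) (hπαc : ContinuousOn πα (Set.Ioi 0))
    (hπμ0 : ∀ t > 0, 0 < πμ t) (hπα0 : ∀ t > 0, 0 < πα t)
    (hprod : ∃ c > 0, ∀ μ > 0, ∀ α > 0, c * (πμ μ * πα α) ≤ prior μ α)
    (k : ℝ)
    (hμk : ∃ c > 0, ∀ t > 0, c * t ^ k ≤ πμ t)
    (hcase :
      k < -1 ∨
      (-1 < k ∧ ∃ q₀ : ℝ,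
        Filter.limsup (fun t => ENNReal.ofReal (t ^ q₀ / πα t)) (𝓝[>] (0:ℝ)) < ⊤) ∨
      (k = -1 ∧ ∃ q₀ : ℝ,
        Filter.limsup (fun t => ENNReal.ofReal (t ^ q₀ / πα t)) (𝓝[>] (0:ℝ)) < ⊤ ∧
        (n : ℝ) ≤ -q₀)) :
    (∫⁻ α in Set.Ioi (0:ℝ), ∫⁻ μ in Set.Ioi (0:ℝ),
      ENNReal.ofReal (prior μ α * α ^ n *
        (∏ i, x i ^ (α * φ - 1)) * μ ^ ((n : ℝ) * α * φ) *
        Real.exp (-(μ ^ α * ∑ i, x i ^ α)))) = ⊤ := by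
  obtain ⟨C, hC, hF⟩ := inner_lower (n := n) hx φ hπα0 hprod hμk
  have hn0 : 0 < n := by omega
  have hnφ : 0 < (n : ℝ) * φ := by positivity
  rcases hcase with hk | ⟨hk, q, hq⟩ | ⟨hk, q, hq, hnq⟩
  · refine outer_eq_top one_pos ?_
    -- `k + nαφ ≤ -1` for all small `α`, so the inner integral is infinite there.
    have hlim : Tendsto (fun α : ℝ => k + n * α * φ) (𝓝[>] 0) (𝓝 k) := by
      have : Continuous fun α : ℝ => k + n * α * φ := by fun_prop
      simpa using (this.tendsto 0).mono_left nhdsWithin_le_nhds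
    filter_upwards [hlim.eventually_lt_const hk, Ioc_mem_nhdsGT (zero_lt_one' ℝ)] with α h1 hα
    have h2 := hF α hα
    have hpos : 0 < C * (πα α * α ^ n) :=
      mul_pos hC (mul_pos (hπα0 α hα.1) (pow_pos hα.1 n))
    rw [lintegral_rpow_eq_top h1.le (Real.exp_pos _),
      ENNReal.mul_top (by simpa using hpos), top_le_iff] at h2
    rw [h2]
    exact le_top
  · refine top_of_estimate (K := (k + n * φ + 1)⁻¹) hn0 hφ hk.le
      (inv_pos.2 (by linarith)) hπα0 hq hC hF ?_
    filter_upwards [eventually_rpow_mul_exp (b := k + 1) (by linarith) (q + n + 1),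
      Ioc_mem_nhdsGT (zero_lt_one' ℝ)] with α h1 hα
    have hα0 : 0 < α := hα.1
    have hnp : 0 < (n : ℝ) * α * φ := by positivity
    have h2 : k + n * α * φ + 1 ≤ k + n * φ + 1 := by
      have := mul_le_mul_of_nonneg_left hα.2 hnφ.le
      linarith
    have hE : 0 < k + n * α * φ + 1 := by linarith
    rw [rpow_add hα0, rpow_one] at h1
    rw [rpow_neg_one]
    calc (k + n * φ + 1)⁻¹ * α⁻¹ ≤ (k + n * α * φ + 1)⁻¹ * α⁻¹ := by gcongr
      _ = (k + n * α * φ + 1)⁻¹ * α⁻¹ * 1 := by ring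
      _ ≤ (k + n * α * φ + 1)⁻¹ * α⁻¹ *
          (α ^ (q + n) * α * Real.exp ((k + 1) / α)) := by gcongr
      _ = _ := by field_simp
  · refine top_of_estimate (K := (n * φ)⁻¹) hn0 hφ hk.ge
      (inv_pos.2 hnφ) hπα0 hq hC hF ?_
    filter_upwards [Ioc_mem_nhdsGT (zero_lt_one' ℝ)] with α hα
    have hα0 : 0 < α := hα.1
    have h1 : 1 ≤ α ^ (q + n) := one_le_rpow_of_pos_of_le_one_of_nonpos hα0 hα.2 (by linarith)
    have h2 : Real.exp ((k + 1) / α) / (k + n * α * φ + 1) = (n * φ)⁻¹ * α⁻¹ := by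
      rw [show k + n * α * φ + 1 = n * φ * α by rw [hk]; ring, hk]
      simp [mul_comm]
    rw [h2, rpow_neg_one]
    exact le_mul_of_one_le_left (by positivity) h1
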